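/- There exists a universal constant C > 0 such that for all integers n1, n2 > 1 and every 0 < δ ≤ 1, the entropy integral of the Frobenius-norm unit ball of isotonic matrices satisfies ∫_δ^1 sqrt( log N(ε, B(0,1)) ) dε ≤ (sqrt(C)/2) · (log n1)(log n2) · ( log( 4 sqrt(log n1 · log n2) / δ ) )². -/

import Mathlib

open MeasureTheory ProbabilityTheory

noncomputable section

/-- The set of isotonic (coordinatewise nondecreasing) `n1 × n2` matrices. -/
def Isotonic {n1 n2 : ℕ} (θ : Fin n1 → Fin n2 → ℝ) : Prop :=
  ∀ ⦃i k : Fin n1⦄ ⦃j l : Fin n2⦄, i ≤ k → j ≤ l → θ i j ≤ θ k l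

/-- Squared Frobenius norm of a matrix. -/
def frobSq {n1 n2 : ℕ} (θ : Fin n1 → Fin n2 → ℝ) : ℝ :=
  ∑ i, ∑ j, θ i j ^ 2

/-- The `ε`-covering number of `F ⊆ ℝ^{n1×n2}` in the Frobenius metric: the smallest
cardinality of a finite set `S` such that every point of `F` is within Frobenius
distance `ε` of some point of `S`. -/
def coverNum {n1 n2 : ℕ} (ε : ℝ) (F : Set (Fin n1 → Fin n2 → ℝ)) : ℕ :=
  sInf {k | ∃ S : Finset (Fin n1 → Fin n2 → ℝ), S.card = k ∧
    ∀ θ ∈ F, ∃ s ∈ S, frobSq (θ - s) ≤ ε ^ 2}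

/-- `truncBits s i` clears all but the leading `s + 1` binary digits of `i`. -/
def truncBits (s i : ℕ) : ℕ := i / 2 ^ (Nat.log 2 i - s) * 2 ^ (Nat.log 2 i - s)

theorem truncBits_le (s i : ℕ) : truncBits s i ≤ i := Nat.div_mul_le_self _ _

theorem truncBits_eq {s d p r : ℕ} (hp : 2 ^ s ≤ p) (hp' : p < 2 ^ (s + 1)) (hr : r < 2 ^ d) :
    truncBits s (p * 2 ^ d + r) = p * 2 ^ d := by
  have hlog : Nat.log 2 (p * 2 ^ d + r) = s + d := by
    apply Nat.log_eq_of_pow_le_of_lt_pow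
    · rw [pow_add]
      exact le_add_right (Nat.mul_le_mul_right _ hp)
    · calc p * 2 ^ d + r < (p + 1) * 2 ^ d := by rw [add_mul, one_mul]; omega
        _ ≤ 2 ^ (s + 1) * 2 ^ d := Nat.mul_le_mul_right _ hp'
        _ = 2 ^ (s + d + 1) := by ring
  rw [truncBits, hlog, Nat.add_sub_cancel_left, mul_comm p,
    Nat.mul_add_div (by positivity), Nat.div_eq_of_lt hr, add_zero, mul_comm]

theorem truncBits_eq_self {s u i : ℕ} (hi : i ∈ Finset.Ico (2 ^ u) (2 ^ (u + 1))) (h : u ≤ s) :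
    truncBits s i = i := by
  rw [Finset.mem_Ico] at hi
  have : Nat.log 2 i = u := Nat.log_eq_of_pow_le_of_lt_pow hi.1 hi.2
  simp [truncBits, this, Nat.sub_eq_zero_of_le h]

theorem sum_Ico_mul_eq_sum_cells (φ : ℕ → ℝ) (D : ℕ) {M N : ℕ} (h : M ≤ N) :
    ∑ i ∈ Finset.Ico (M * D) (N * D), φ i =
      ∑ p ∈ Finset.Ico M N, ∑ r ∈ Finset.range D, φ (p * D + r) := by
  induction N, h using Nat.le_induction with
  | base => simp
  | succ N hMN ih =>
    rw [Finset.sum_Ico_succ_top hMN, ← ih,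
      ← Finset.sum_Ico_consecutive φ (Nat.mul_le_mul_right D hMN)
        (Nat.mul_le_mul_right D N.le_succ), Finset.sum_Ico_eq_sum_range φ (N * D)]
    congr 3
    rw [Nat.succ_mul]; omega

/-- A dyadic block splits into `2 ^ s` cells of length `2 ^ d`. -/
theorem sum_dyadic_eq_sum_cells (φ : ℕ → ℝ) (s d : ℕ) :
    ∑ i ∈ Finset.Ico (2 ^ (s + d)) (2 ^ (s + d + 1)), φ i =
      ∑ p ∈ Finset.Ico (2 ^ s) (2 ^ (s + 1)), ∑ r ∈ Finset.range (2 ^ d), φ (p * 2 ^ d + r) := by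
  rw [← sum_Ico_mul_eq_sum_cells φ (2 ^ d) (Nat.pow_le_pow_right two_pos s.le_succ), ← pow_add,
    ← pow_add, show s + 1 + d = s + d + 1 by ring]

theorem sum_Ico_one_two_pow (φ : ℕ → ℝ) (U : ℕ) :
    ∑ i ∈ Finset.Ico 1 (2 ^ U), φ i =
      ∑ u ∈ Finset.range U, ∑ i ∈ Finset.Ico (2 ^ u) (2 ^ (u + 1)), φ i := by
  induction U with
  | zero => simp
  | succ U ih =>
    rw [Finset.sum_range_succ, ← ih, Finset.sum_Ico_consecutive _ Nat.one_le_two_pow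
      (Nat.pow_le_pow_right two_pos U.le_succ)]

/-- Every rectangle sum of `w` is at most `B` times the square root of the area. -/
def RectBound (w : ℕ → ℕ → ℝ) (B : ℝ) : Prop :=
  ∀ a b m n : ℕ, |∑ r ∈ Finset.range m, ∑ t ∈ Finset.range n, w (a + r) (b + t)| ≤
    B * √((m : ℝ) * n)

theorem RectBound.transpose {w : ℕ → ℕ → ℝ} {B : ℝ} (h : RectBound w B) :
    RectBound (fun i j => w j i) B := by
  intro a b m n
  rw [Finset.sum_comm, mul_comm (m : ℝ)]
  exact h b a n m

theorem sum_truncate_parity_sub_le {G : ℕ → ℝ} (hG : Antitone G) (h0 : ∀ i, 0 ≤ G i) (m N : ℕ)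
    (h : 2 * m < N) :
    ∑ p ∈ Finset.Ico (2 * m) N, (G (p / 2 * 2) - G p) ≤ G (2 * m) := by
  suffices ∑ p ∈ Finset.Ico (2 * m) N, (G (p / 2 * 2) - G p) ≤ G (2 * m) - G (N - 1) by
    linarith [h0 (N - 1)]
  induction N, (Nat.succ_le_of_lt h) using Nat.le_induction with
  | base => simp [mul_comm]
  | succ N hN ih =>
    rw [Finset.sum_Ico_succ_top (by omega)]
    have h1 := ih (by omega)
    have h2 : G (N / 2 * 2) ≤ G (N - 1) := hG (by omega)
    simp only [Nat.add_sub_cancel]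
    linarith

theorem row_refinement_cells {F w : ℕ → ℕ → ℝ} {B : ℝ} (hB : 0 ≤ B) (hw : RectBound w B)
    (hF0 : ∀ i j, 0 ≤ F i j) (hF1 : ∀ j, Antitone fun i => F i j) (hF2 : ∀ i, Antitone (F i))
    (s d t e : ℕ) (hts : t ≤ s + 1) :
    ∑ i ∈ Finset.Ico (2 ^ (s + 1 + d)) (2 ^ (s + 1 + d + 1)),
      ∑ j ∈ Finset.Ico (2 ^ (t + e)) (2 ^ (t + e + 1)),
        w i j * (F (truncBits (s + 1) i) (truncBits t j) - F (truncBits s i) (truncBits t j)) ≤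
      B * √(2 ^ (s + 1 + d + (t + e))) * F (2 ^ (s + 1 + d)) (2 ^ (t + e)) := by
  set a := F (2 ^ (s + 1 + d)) (2 ^ (t + e)) with ha
  have ha0 : 0 ≤ a := hF0 _ _
  let c : ℕ → ℕ → ℝ := fun p q => F (p * 2 ^ d) (q * 2 ^ e) - F (p / 2 * 2 * 2 ^ d) (q * 2 ^ e)
  have hcell : ∀ p ∈ Finset.Ico (2 ^ (s + 1)) (2 ^ (s + 1 + 1)), ∀ r ∈ Finset.range (2 ^ d),
      truncBits (s + 1) (p * 2 ^ d + r) = p * 2 ^ d ∧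
      truncBits s (p * 2 ^ d + r) = p / 2 * 2 * 2 ^ d := by
    intro p hp r hr
    rw [Finset.mem_Ico] at hp
    rw [Finset.mem_range] at hr
    refine ⟨truncBits_eq hp.1 hp.2 hr, ?_⟩
    have hr2 : p % 2 * 2 ^ d + r < 2 ^ (d + 1) := by
      have : p % 2 * 2 ^ d ≤ 1 * 2 ^ d := Nat.mul_le_mul_right _ (by omega)
      rw [pow_succ]; omega
    have hsplit : p * 2 ^ d + r = p / 2 * 2 ^ (d + 1) + (p % 2 * 2 ^ d + r) := by
      conv_lhs => rw [← Nat.div_add_mod p 2]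
      ring
    have h1 : 2 ^ s ≤ p / 2 := by have := hp.1; rw [pow_succ] at this; omega
    have h2 : p / 2 < 2 ^ (s + 1) := by have := hp.2; rw [pow_succ] at this; omega
    rw [hsplit, truncBits_eq h1 h2 hr2]
    ring
  calc _ = ∑ p ∈ Finset.Ico (2 ^ (s + 1)) (2 ^ (s + 1 + 1)), ∑ r ∈ Finset.range (2 ^ d),
        ∑ q ∈ Finset.Ico (2 ^ t) (2 ^ (t + 1)), ∑ r' ∈ Finset.range (2 ^ e),
          w (p * 2 ^ d + r) (q * 2 ^ e + r') * c p q := by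
        rw [sum_dyadic_eq_sum_cells _ (s + 1) d]
        refine Finset.sum_congr rfl fun p hp => Finset.sum_congr rfl fun r hr => ?_
        rw [sum_dyadic_eq_sum_cells _ t e, (hcell p hp r hr).1, (hcell p hp r hr).2]
        refine Finset.sum_congr rfl fun q hq => Finset.sum_congr rfl fun r' hr' => ?_
        rw [Finset.mem_Ico] at hq
        rw [truncBits_eq hq.1 hq.2 (Finset.mem_range.1 hr')]
    _ = ∑ q ∈ Finset.Ico (2 ^ t) (2 ^ (t + 1)), ∑ p ∈ Finset.Ico (2 ^ (s + 1)) (2 ^ (s + 1 + 1)),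
        (∑ r ∈ Finset.range (2 ^ d), ∑ r' ∈ Finset.range (2 ^ e),
          w (p * 2 ^ d + r) (q * 2 ^ e + r')) * c p q := by
        rw [Finset.sum_comm (s := Finset.Ico (2 ^ t) (2 ^ (t + 1)))]
        refine Finset.sum_congr rfl fun p _ => ?_
        rw [Finset.sum_comm]
        refine Finset.sum_congr rfl fun q _ => ?_
        simp_rw [Finset.sum_mul]
    _ ≤ ∑ q ∈ Finset.Ico (2 ^ t) (2 ^ (t + 1)), ∑ p ∈ Finset.Ico (2 ^ (s + 1)) (2 ^ (s + 1 + 1)),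
        (B * √(2 ^ (d + e))) * (-c p q) := by
        refine Finset.sum_le_sum fun q _ => Finset.sum_le_sum fun p _ => ?_
        have hc : c p q ≤ 0 := sub_nonpos.2 <| hF1 (q * 2 ^ e) <|
          Nat.mul_le_mul_right _ (Nat.div_mul_le_self _ _)
        have hb := hw (p * 2 ^ d) (q * 2 ^ e) (2 ^ d) (2 ^ e)
        push_cast at hb
        rw [← pow_add] at hb
        nlinarith [(abs_le.1 hb).1]
    _ ≤ ∑ q ∈ Finset.Ico (2 ^ t) (2 ^ (t + 1)), (B * √(2 ^ (d + e))) * a := by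
        refine Finset.sum_le_sum fun q hq => ?_
        rw [← Finset.mul_sum]
        refine mul_le_mul_of_nonneg_left ?_ (by positivity)
        have hG : Antitone fun p => F (p * 2 ^ d) (q * 2 ^ e) := fun x y hxy =>
          hF1 (q * 2 ^ e) (Nat.mul_le_mul_right _ hxy)
        have := sum_truncate_parity_sub_le hG (fun i => hF0 _ _) (2 ^ s) (2 ^ (s + 1 + 1))
          (by rw [← pow_succ']; exact Nat.pow_lt_pow_right (by norm_num) (by omega))
        rw [← pow_succ'] at this
        simp only [c, neg_sub]
        refine this.trans ?_
        rw [← pow_add, ha]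
        refine hF2 _ ?_
        rw [pow_add]
        exact Nat.mul_le_mul_right _ (Finset.mem_Ico.1 hq).1
    _ = B * (2 ^ t * √(2 ^ (d + e))) * a := by
        rw [Finset.sum_const, Nat.card_Ico, nsmul_eq_mul, pow_succ, mul_two, Nat.add_sub_cancel]
        push_cast
        ring
    _ ≤ _ := by
        gcongr
        rw [show (2 : ℝ) ^ t = √(2 ^ (t + t)) by rw [pow_add, Real.sqrt_mul_self (by positivity)],
          ← Real.sqrt_mul (by positivity), ← pow_add]
        exact Real.sqrt_le_sqrt (pow_le_pow_right₀ one_le_two (by omega))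

/-- Pairing of `w` with one row refinement of the dyadic approximation of an antitone `F`. -/
theorem row_refinement_le {F w : ℕ → ℕ → ℝ} {B : ℝ} (hB : 0 ≤ B) (hw : RectBound w B)
    (hF0 : ∀ i j, 0 ≤ F i j) (hF1 : ∀ j, Antitone fun i => F i j) (hF2 : ∀ i, Antitone (F i))
    (u v s t : ℕ) (hts : t ≤ s + 1) :
    ∑ i ∈ Finset.Ico (2 ^ u) (2 ^ (u + 1)), ∑ j ∈ Finset.Ico (2 ^ v) (2 ^ (v + 1)),
        w i j * (F (truncBits (s + 1) i) (truncBits t j) - F (truncBits s i) (truncBits t j)) ≤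
      B * √(2 ^ (u + v)) * F (2 ^ u) (2 ^ v) := by
  rcases le_or_gt u s with hu | hu
  · rw [Finset.sum_eq_zero]
    · exact mul_nonneg (by positivity) (hF0 _ _)
    · intro i hi
      rw [truncBits_eq_self hi hu, truncBits_eq_self hi (hu.trans s.le_succ)]
      simp
  · obtain ⟨d, rfl⟩ := Nat.exists_eq_add_of_le (Nat.succ_le_of_lt hu)
    rcases le_total t v with hv | hv
    · obtain ⟨e, rfl⟩ := Nat.exists_eq_add_of_le hv
      exact row_refinement_cells hB hw hF0 hF1 hF2 s d t e hts
    · have := row_refinement_cells hB hw hF0 hF1 hF2 s d v 0 (hv.trans hts)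
      refine le_trans (le_of_eq ?_) this
      refine Finset.sum_congr rfl fun i _ => Finset.sum_congr rfl fun j hj => ?_
      rw [truncBits_eq_self hj hv, truncBits_eq_self (u := v) hj le_rfl]

theorem block_pairing_le {F w : ℕ → ℕ → ℝ} {B : ℝ} (hB : 0 ≤ B) (hw : RectBound w B)
    (hF0 : ∀ i j, 0 ≤ F i j) (hF1 : ∀ j, Antitone fun i => F i j) (hF2 : ∀ i, Antitone (F i))
    (u v J : ℕ) :
    ∑ i ∈ Finset.Ico (2 ^ u) (2 ^ (u + 1)), ∑ j ∈ Finset.Ico (2 ^ v) (2 ^ (v + 1)),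
        w i j * F (truncBits J i) (truncBits J j) ≤
      (1 + 2 * J) * (B * √(2 ^ (u + v)) * F (2 ^ u) (2 ^ v)) := by
  induction J with
  | zero =>
    have hzero : ∀ u, ∀ i ∈ Finset.Ico (2 ^ u) (2 ^ (u + 1)), truncBits 0 i = 2 ^ u := by
      intro u i hi
      rw [Finset.mem_Ico] at hi
      obtain ⟨r, rfl⟩ := Nat.exists_eq_add_of_le hi.1
      have := truncBits_eq (s := 0) (d := u) (p := 1) (r := r) (by simp) (by simp)
        (by have := hi.2; rw [pow_succ] at this; omega)
      simpa using this
    have hb := hw (2 ^ u) (2 ^ v) (2 ^ u) (2 ^ v)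
    push_cast at hb
    rw [← pow_add] at hb
    have key : ∑ i ∈ Finset.Ico (2 ^ u) (2 ^ (u + 1)), ∑ j ∈ Finset.Ico (2 ^ v) (2 ^ (v + 1)),
        w i j * F (truncBits 0 i) (truncBits 0 j) =
        (∑ r ∈ Finset.range (2 ^ u), ∑ t ∈ Finset.range (2 ^ v), w (2 ^ u + r) (2 ^ v + t)) *
          F (2 ^ u) (2 ^ v) := by
      have e : ∀ u, 2 ^ (u + 1) - 2 ^ u = 2 ^ u := fun u => by rw [pow_succ]; omega
      have : ∀ i ∈ Finset.Ico (2 ^ u) (2 ^ (u + 1)), ∑ j ∈ Finset.Ico (2 ^ v) (2 ^ (v + 1)),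
          w i j * F (truncBits 0 i) (truncBits 0 j) =
          (∑ t ∈ Finset.range (2 ^ v), w i (2 ^ v + t)) * F (2 ^ u) (2 ^ v) := by
        intro i hi
        rw [Finset.sum_congr rfl fun j hj => by rw [hzero u i hi, hzero v j hj], ← Finset.sum_mul,
          Finset.sum_Ico_eq_sum_range, e]
      rw [Finset.sum_congr rfl this, Finset.sum_Ico_eq_sum_range, e, Finset.sum_mul]
    rw [key]
    simp only [Nat.cast_zero, mul_zero, add_zero, one_mul]
    exact mul_le_mul_of_nonneg_right (abs_le.1 hb).2 (hF0 _ _)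
  | succ J ih =>
    have h1 := row_refinement_le hB hw hF0 hF1 hF2 u v J J J.le_succ
    have h2 := row_refinement_le (F := fun i j => F j i) hB hw.transpose (fun i j => hF0 j i)
      hF2 hF1 v u J (J + 1) le_rfl
    rw [Finset.sum_comm, add_comm v u] at h2
    simp only [mul_sub, Finset.sum_sub_distrib] at h1 h2
    push_cast
    linarith

theorem sum_truncBits_sub_le {φ : ℕ → ℝ} (hφ : Antitone φ) (h0 : ∀ i, 0 ≤ φ i) (u J : ℕ) :
    ∑ i ∈ Finset.Ico (2 ^ u) (2 ^ (u + 1)), (φ (truncBits J i) - φ i) ≤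
      2 ^ u / 2 ^ J * φ (2 ^ u) := by
  rcases le_total u J with hu | hu
  · rw [Finset.sum_eq_zero fun i hi => by rw [truncBits_eq_self hi hu, sub_self]]
    exact mul_nonneg (by positivity) (h0 _)
  · obtain ⟨d, rfl⟩ := Nat.exists_eq_add_of_le hu
    rw [sum_dyadic_eq_sum_cells]
    calc _ ≤ ∑ p ∈ Finset.Ico (2 ^ J) (2 ^ (J + 1)), ∑ r ∈ Finset.range (2 ^ d),
          (φ (p * 2 ^ d) - φ ((p + 1) * 2 ^ d)) := by
          refine Finset.sum_le_sum fun p hp => Finset.sum_le_sum fun r hr => ?_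
          rw [Finset.mem_Ico] at hp
          rw [Finset.mem_range] at hr
          rw [truncBits_eq hp.1 hp.2 hr]
          have : φ ((p + 1) * 2 ^ d) ≤ φ (p * 2 ^ d + r) := hφ (by rw [add_mul]; omega)
          linarith
      _ = 2 ^ d * (φ (2 ^ (J + d)) - φ (2 ^ (J + 1 + d))) := by
          simp only [Finset.sum_const, Finset.card_range, nsmul_eq_mul]
          rw [← Finset.mul_sum, pow_add 2 J d, pow_add 2 (J + 1) d, Nat.cast_pow, Nat.cast_two]
          congr 1
          have := Finset.sum_Ico_sub (fun p => -φ (p * 2 ^ d))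
            (Nat.pow_le_pow_right two_pos (Nat.le_succ J) : 2 ^ J ≤ 2 ^ (J + 1))
          simp only [neg_sub_neg] at this
          exact this
      _ ≤ 2 ^ d * φ (2 ^ (J + d)) := by
          gcongr
          linarith [h0 (2 ^ (J + 1 + d))]
      _ = _ := by
          rw [pow_add (2 : ℝ)]
          field_simp

theorem block_error_le {F : ℕ → ℕ → ℝ}
    (hF0 : ∀ i j, 0 ≤ F i j) (hF1 : ∀ j, Antitone fun i => F i j) (hF2 : ∀ i, Antitone (F i))
    (u v J : ℕ) :
    ∑ i ∈ Finset.Ico (2 ^ u) (2 ^ (u + 1)), ∑ j ∈ Finset.Ico (2 ^ v) (2 ^ (v + 1)),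
        (F i j - F (truncBits J i) (truncBits J j)) ^ 2 ≤
      2 / 2 ^ J * (2 ^ u * (2 ^ v * F (2 ^ u) (2 ^ v) ^ 2)) := by
  set a := F (2 ^ u) (2 ^ v) with ha
  have ha0 : 0 ≤ a := hF0 _ _
  have htb : ∀ u, ∀ i ∈ Finset.Ico (2 ^ u) (2 ^ (u + 1)), 2 ^ u ≤ truncBits J i := by
    intro u i hi
    rw [Finset.mem_Ico] at hi
    have : Nat.log 2 i = u := Nat.log_eq_of_pow_le_of_lt_pow hi.1 hi.2
    rw [truncBits, this]
    have hu : 2 ^ u = 2 ^ (u - (u - J)) * 2 ^ (u - J) := by rw [← pow_add]; congr 1; omega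
    conv_lhs => rw [hu]
    refine Nat.mul_le_mul_right _ ((Nat.le_div_iff_mul_le (by positivity)).2 ?_)
    rw [← hu]; exact hi.1
  calc _ ≤ ∑ i ∈ Finset.Ico (2 ^ u) (2 ^ (u + 1)), ∑ j ∈ Finset.Ico (2 ^ v) (2 ^ (v + 1)),
        a * ((F (truncBits J i) (truncBits J j) - F (truncBits J i) j) +
          (F (truncBits J i) j - F i j)) := by
        refine Finset.sum_le_sum fun i hi => Finset.sum_le_sum fun j hj => ?_
        have h1 : F (truncBits J i) (truncBits J j) ≤ a :=
          (hF1 _ (htb u i hi)).trans (hF2 _ (htb v j hj))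
        have h2 : F (truncBits J i) j ≤ F (truncBits J i) (truncBits J j) :=
          hF2 _ (truncBits_le _ _)
        have h3 : F i j ≤ F (truncBits J i) j := hF1 j (truncBits_le _ _)
        nlinarith [hF0 i j]
    _ = a * (∑ i ∈ Finset.Ico (2 ^ u) (2 ^ (u + 1)), ∑ j ∈ Finset.Ico (2 ^ v) (2 ^ (v + 1)),
          (F (truncBits J i) (truncBits J j) - F (truncBits J i) j) +
        ∑ j ∈ Finset.Ico (2 ^ v) (2 ^ (v + 1)), ∑ i ∈ Finset.Ico (2 ^ u) (2 ^ (u + 1)),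
          (F (truncBits J i) j - F i j)) := by
        rw [Finset.sum_comm (s := Finset.Ico (2 ^ v) (2 ^ (v + 1)))]
        simp only [← Finset.sum_add_distrib, Finset.mul_sum]
    _ ≤ a * (∑ i ∈ Finset.Ico (2 ^ u) (2 ^ (u + 1)), 2 ^ v / 2 ^ J * a +
        ∑ j ∈ Finset.Ico (2 ^ v) (2 ^ (v + 1)), 2 ^ u / 2 ^ J * a) := by
        gcongr with i hi j hj
        · refine (sum_truncBits_sub_le (hF2 _) (hF0 _) v J).trans ?_
          gcongr
          exact hF1 _ (htb u i hi)
        · refine (sum_truncBits_sub_le (hF1 j) (fun i => hF0 i j) u J).trans ?_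
          gcongr
          exact hF2 _ (Finset.mem_Ico.1 hj).1
    _ = _ := by
        simp only [Finset.sum_const, Nat.card_Ico, nsmul_eq_mul, pow_succ, mul_two,
          Nat.add_sub_cancel]
        push_cast
        ring

theorem sum_condensed_le_two_mul {φ : ℕ → ℝ} (hφ : Antitone φ) (h0 : ∀ i, 0 ≤ φ i) (U : ℕ) :
    ∑ u ∈ Finset.range U, 2 ^ u * φ (2 ^ u) ≤ 2 * ∑ i ∈ Finset.Ico 1 (2 ^ U), φ i := by
  rcases U with _ | U
  · simp
  suffices h : ∑ u ∈ Finset.range (U + 1), 2 ^ u * φ (2 ^ u) ≤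
      2 * ∑ i ∈ Finset.Ico 1 (2 ^ U + 1), φ i by
    refine h.trans (mul_le_mul_of_nonneg_left ?_ two_pos.le)
    refine Finset.sum_le_sum_of_subset_of_nonneg (Finset.Ico_subset_Ico_right ?_)
      fun i _ _ => h0 i
    have := Nat.one_le_two_pow (n := U)
    rw [pow_succ]; omega
  induction U with
  | zero => simp; linarith [h0 1]
  | succ U ih =>
    rw [Finset.sum_range_succ, ← Finset.sum_Ico_consecutive φ (Nat.le_add_left 1 (2 ^ U))
      (by gcongr <;> simp : 2 ^ U + 1 ≤ 2 ^ (U + 1) + 1), mul_add]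
    refine add_le_add ih ?_
    have : ∑ i ∈ Finset.Ico (2 ^ U + 1) (2 ^ (U + 1) + 1), φ (2 ^ (U + 1)) ≤
        ∑ i ∈ Finset.Ico (2 ^ U + 1) (2 ^ (U + 1) + 1), φ i :=
      Finset.sum_le_sum fun i hi => hφ (by rw [Finset.mem_Ico] at hi; omega)
    rw [Finset.sum_const, Nat.card_Ico, nsmul_eq_mul,
      show 2 ^ (U + 1) + 1 - (2 ^ U + 1) = 2 ^ U by rw [pow_succ]; omega] at this
    push_cast at this
    rw [pow_succ (2 : ℝ)]
    linarith

/-- The mass of an antitone function in the plane controls its values at dyadic corners. -/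
theorem sum_dyadic_corners_le {F : ℕ → ℕ → ℝ}
    (hF0 : ∀ i j, 0 ≤ F i j) (hF1 : ∀ j, Antitone fun i => F i j) (hF2 : ∀ i, Antitone (F i))
    (U V : ℕ) :
    ∑ u ∈ Finset.range U, ∑ v ∈ Finset.range V, 2 ^ u * (2 ^ v * F (2 ^ u) (2 ^ v) ^ 2) ≤
      4 * ∑ i ∈ Finset.Ico 1 (2 ^ U), ∑ j ∈ Finset.Ico 1 (2 ^ V), F i j ^ 2 := by
  calc _ ≤ ∑ u ∈ Finset.range U, 2 ^ u * (2 * ∑ j ∈ Finset.Ico 1 (2 ^ V), F (2 ^ u) j ^ 2) := by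
        refine Finset.sum_le_sum fun u _ => ?_
        rw [← Finset.mul_sum]
        refine mul_le_mul_of_nonneg_left ?_ (by positivity)
        exact sum_condensed_le_two_mul (φ := fun j => F (2 ^ u) j ^ 2)
          (fun x y h => pow_le_pow_left₀ (hF0 _ _) (hF2 _ h) 2) (fun j => sq_nonneg _) V
    _ ≤ 2 * ∑ i ∈ Finset.Ico 1 (2 ^ U), (2 * ∑ j ∈ Finset.Ico 1 (2 ^ V), F i j ^ 2) := by
        refine sum_condensed_le_two_mul (φ := fun i => 2 * ∑ j ∈ Finset.Ico 1 (2 ^ V), F i j ^ 2)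
          (fun x y h => ?_) (fun i => by positivity) U
        refine mul_le_mul_of_nonneg_left (Finset.sum_le_sum fun j _ => ?_) two_pos.le
        exact pow_le_pow_left₀ (hF0 _ _) (hF1 j h) 2
    _ = _ := by rw [← Finset.mul_sum]; ring

theorem sum_window_eq_sum_blocks (φ : ℕ → ℕ → ℝ) (U V : ℕ) :
    ∑ i ∈ Finset.Ico 1 (2 ^ U), ∑ j ∈ Finset.Ico 1 (2 ^ V), φ i j =
      ∑ u ∈ Finset.range U, ∑ v ∈ Finset.range V,
        ∑ i ∈ Finset.Ico (2 ^ u) (2 ^ (u + 1)), ∑ j ∈ Finset.Ico (2 ^ v) (2 ^ (v + 1)), φ i j := by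
  rw [sum_Ico_one_two_pow]
  refine Finset.sum_congr rfl fun u _ => ?_
  rw [Finset.sum_comm, sum_Ico_one_two_pow]
  exact Finset.sum_congr rfl fun v _ => Finset.sum_comm

theorem window_error_le {F : ℕ → ℕ → ℝ}
    (hF0 : ∀ i j, 0 ≤ F i j) (hF1 : ∀ j, Antitone fun i => F i j) (hF2 : ∀ i, Antitone (F i))
    (U V J : ℕ) (hF : ∑ i ∈ Finset.Ico 1 (2 ^ U), ∑ j ∈ Finset.Ico 1 (2 ^ V), F i j ^ 2 ≤ 1) :
    ∑ i ∈ Finset.Ico 1 (2 ^ U), ∑ j ∈ Finset.Ico 1 (2 ^ V),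
        (F i j - F (truncBits J i) (truncBits J j)) ^ 2 ≤ 8 / 2 ^ J := by
  rw [sum_window_eq_sum_blocks]
  calc _ ≤ ∑ u ∈ Finset.range U, ∑ v ∈ Finset.range V,
        2 / 2 ^ J * (2 ^ u * (2 ^ v * F (2 ^ u) (2 ^ v) ^ 2)) :=
        Finset.sum_le_sum fun u _ => Finset.sum_le_sum fun v _ => block_error_le hF0 hF1 hF2 u v J
    _ ≤ 2 / 2 ^ J * (4 * 1) := by
        simp_rw [← Finset.mul_sum _ _ ((2 : ℝ) / 2 ^ J)]
        gcongr
        exact (sum_dyadic_corners_le hF0 hF1 hF2 U V).trans (by gcongr)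
    _ = _ := by ring

theorem window_pairing_le {F w : ℕ → ℕ → ℝ} {B : ℝ} (hB : 0 ≤ B) (hw : RectBound w B)
    (hF0 : ∀ i j, 0 ≤ F i j) (hF1 : ∀ j, Antitone fun i => F i j) (hF2 : ∀ i, Antitone (F i))
    (U V J : ℕ) (hF : ∑ i ∈ Finset.Ico 1 (2 ^ U), ∑ j ∈ Finset.Ico 1 (2 ^ V), F i j ^ 2 ≤ 1) :
    ∑ i ∈ Finset.Ico 1 (2 ^ U), ∑ j ∈ Finset.Ico 1 (2 ^ V),
        w i j * F (truncBits J i) (truncBits J j) ≤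
      (1 + 2 * J) * (2 * √((U : ℝ) * V)) * B := by
  have hsum : ∑ u ∈ Finset.range U, ∑ v ∈ Finset.range V, √(2 ^ (u + v)) * F (2 ^ u) (2 ^ v) ≤
      2 * √((U : ℝ) * V) := by
    rw [← Finset.sum_product']
    refine le_of_sq_le_sq ?_ (by positivity)
    calc _ ≤ _ := sq_sum_le_card_mul_sum_sq
      _ = (U * V : ℝ) * ∑ u ∈ Finset.range U, ∑ v ∈ Finset.range V,
          2 ^ u * (2 ^ v * F (2 ^ u) (2 ^ v) ^ 2) := by
          rw [← Finset.sum_product', Finset.card_product, Finset.card_range, Finset.card_range]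
          push_cast
          congr 1
          refine Finset.sum_congr rfl fun x _ => ?_
          rw [mul_pow, Real.sq_sqrt (by positivity), pow_add]
          ring
      _ ≤ (U * V : ℝ) * (4 * 1) := by
          gcongr
          exact (sum_dyadic_corners_le hF0 hF1 hF2 U V).trans (by gcongr)
      _ = _ := by
          rw [mul_pow, Real.sq_sqrt (by positivity)]
          ring
  rw [sum_window_eq_sum_blocks]
  calc _ ≤ ∑ u ∈ Finset.range U, ∑ v ∈ Finset.range V,
        (1 + 2 * J) * B * (√(2 ^ (u + v)) * F (2 ^ u) (2 ^ v)) :=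
        Finset.sum_le_sum fun u _ => Finset.sum_le_sum fun v _ =>
          (block_pairing_le hB hw hF0 hF1 hF2 u v J).trans (le_of_eq (by ring))
    _ ≤ (1 + 2 * J) * B * (2 * √((U : ℝ) * V)) := by
        simp_rw [← Finset.mul_sum _ _ ((1 + 2 * (J : ℝ)) * B)]
        gcongr
    _ = _ := by ring

/-- Greedy form of Maurey's sparsification: a point `x` of `R` times the symmetric convex hull of
the `v i` (expressed by duality) is close to an average of `k` signed multiples of the `v i`. -/
theorem exists_signed_atoms {E ι : Type*} [NormedAddCommGroup E] [InnerProductSpace ℝ E]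
    [Fintype ι] [Nonempty ι] (v : ι → E) (hv : ∀ i, ‖v i‖ ≤ 1) {R : ℝ} (hR : 0 ≤ R) (x : E)
    (hx : ∀ (y : E) (B : ℝ), 0 ≤ B → (∀ i, |inner ℝ y (v i)| ≤ B) → inner ℝ y x ≤ R * B)
    (k : ℕ) :
    ∃ t : Fin k → ι × Bool,
      ‖∑ l, (x - (if (t l).2 then R else -R) • v (t l).1)‖ ^ 2 ≤ k * R ^ 2 := by
  induction k with
  | zero => exact ⟨Fin.elim0, by simp⟩
  | succ k ih =>
    obtain ⟨t, ht⟩ := ih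
    set D := ∑ l, (x - (if (t l).2 then R else -R) • v (t l).1)
    obtain ⟨i, -, hi⟩ := Finset.exists_max_image Finset.univ
      (fun i => |inner ℝ (D + x) (v i)|) Finset.univ_nonempty
    have hxi := hx (D + x) _ (abs_nonneg _) fun j => hi j (Finset.mem_univ j)
    obtain ⟨b, hb⟩ : ∃ b : Bool,
        R * |inner ℝ (D + x) (v i)| = inner ℝ (D + x) ((if b then R else -R) • v i) := by
      rcases abs_choice (inner ℝ (D + x) (v i)) with h | h
      · exact ⟨true, by rw [h, if_pos rfl, inner_smul_right]⟩
      · exact ⟨false, by rw [h, if_neg (by simp), inner_smul_right]; ring⟩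
    set a := (if b then R else -R) • v i with ha
    have hna : ‖a‖ ^ 2 ≤ R ^ 2 := by
      have : ‖(if b then R else -R : ℝ)‖ = R := by
        cases b <;> simp [abs_of_nonneg hR]
      rw [ha, norm_smul, this, mul_pow]
      nlinarith [pow_le_one₀ (norm_nonneg (v i)) (hv i) (n := 2), sq_nonneg R]
    refine ⟨Fin.cons (i, b) t, ?_⟩
    rw [Fin.sum_univ_succ]
    simp only [Fin.cons_zero, Fin.cons_succ]
    change ‖(x - a) + D‖ ^ 2 ≤ _
    have hexp : ‖(x - a) + D‖ ^ 2 =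
        ‖D‖ ^ 2 + 2 * (inner ℝ (D + x) x - inner ℝ (D + x) a) - ‖x‖ ^ 2 + ‖a‖ ^ 2 := by
      rw [norm_add_sq_real, norm_sub_sq_real, inner_sub_left, inner_add_left, inner_add_left,
        real_inner_self_eq_norm_sq, real_inner_comm x D, real_inner_comm a D]
      ring
    rw [hexp]
    push_cast
    nlinarith [sq_nonneg ‖x‖]

/-- Every rectangle sum of the matrix `w` is at most `B` times the square root of the area. -/
def MatrixRectBound {n1 n2 : ℕ} (w : Fin n1 → Fin n2 → ℝ) (B : ℝ) : Prop :=
  ∀ a b c d : ℕ, |∑ i : Fin n1, ∑ j : Fin n2, if (a ≤ (i : ℕ) + 1 ∧ (i : ℕ) + 1 < b) ∧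
      (c ≤ (j : ℕ) + 1 ∧ (j : ℕ) + 1 < d) then w i j else 0| ≤
    B * √(((b - a : ℕ) : ℝ) * ((d - c : ℕ) : ℝ))

/-- Dual description of `R` times the symmetric convex hull of normalized rectangle indicators. -/
def InRectHull {n1 n2 : ℕ} (R : ℝ) (g : Fin n1 → Fin n2 → ℝ) : Prop :=
  ∀ (w : Fin n1 → Fin n2 → ℝ) (B : ℝ), 0 ≤ B → MatrixRectBound w B →
    ∑ i, ∑ j, w i j * g i j ≤ R * B

theorem MatrixRectBound.neg {n1 n2 : ℕ} {w : Fin n1 → Fin n2 → ℝ} {B : ℝ}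
    (h : MatrixRectBound w B) : MatrixRectBound (-w) B := by
  intro a b c d
  rw [← abs_neg]
  convert h a b c d using 2
  simp only [← Finset.sum_neg_distrib]
  refine Finset.sum_congr rfl fun i _ => Finset.sum_congr rfl fun j _ => ?_
  split_ifs <;> simp

theorem sum_comp_rev {n1 n2 : ℕ} (φ : Fin n1 → Fin n2 → ℝ) :
    ∑ i, ∑ j, φ (Fin.rev i) (Fin.rev j) = ∑ i, ∑ j, φ i j := by
  rw [← Equiv.sum_comp Fin.revPerm fun i => ∑ j, φ i j]
  refine Finset.sum_congr rfl fun i _ => ?_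
  rw [← Equiv.sum_comp Fin.revPerm fun j => φ (Fin.revPerm i) j]
  rfl

theorem MatrixRectBound.rev {n1 n2 : ℕ} {w : Fin n1 → Fin n2 → ℝ} {B : ℝ} (hB : 0 ≤ B)
    (h : MatrixRectBound w B) : MatrixRectBound (fun i j => w (Fin.rev i) (Fin.rev j)) B := by
  intro a b c d
  have := h (n1 + 2 - b) (n1 + 2 - a) (n2 + 2 - d) (n2 + 2 - c)
  rw [← sum_comp_rev] at this
  refine le_trans (le_of_eq ?_) (this.trans ?_)
  · congr 1
    refine Finset.sum_congr rfl fun i _ => Finset.sum_congr rfl fun j _ => ?_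
    refine if_congr ?_ rfl rfl
    have := i.isLt
    have := j.isLt
    simp only [Fin.val_rev]
    omega
  · have h1 : n1 + 2 - a - (n1 + 2 - b) ≤ b - a := by omega
    have h2 : n2 + 2 - c - (n2 + 2 - d) ≤ d - c := by omega
    exact mul_le_mul_of_nonneg_left (Real.sqrt_le_sqrt (mul_le_mul (Nat.cast_le.2 h1)
      (Nat.cast_le.2 h2) (Nat.cast_nonneg _) (Nat.cast_nonneg _))) hB

theorem InRectHull.sub_rev {n1 n2 : ℕ} {R : ℝ} {g₁ g₂ : Fin n1 → Fin n2 → ℝ}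
    (h₁ : InRectHull R g₁) (h₂ : InRectHull R g₂) :
    InRectHull (2 * R) (fun i j => g₁ (Fin.rev i) (Fin.rev j) - g₂ i j) := by
  intro w B hB hw
  have e₁ := h₁ _ B hB (hw.rev hB)
  have e₂ := h₂ _ B hB hw.neg
  rw [← sum_comp_rev] at e₁
  simp only [Fin.rev_rev] at e₁
  simp only [Pi.neg_apply, neg_mul, Finset.sum_neg_distrib] at e₂
  simp only [mul_sub, Finset.sum_sub_distrib]
  linarith

/-- The normalized indicator of a rectangle, with one-based half-open coordinate ranges. -/
def rectAtom (n1 n2 a b c d : ℕ) (i : Fin n1) (j : Fin n2) : ℝ :=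
  if (a ≤ (i : ℕ) + 1 ∧ (i : ℕ) + 1 < b) ∧ (c ≤ (j : ℕ) + 1 ∧ (j : ℕ) + 1 < d) then
    (√(((b - a : ℕ) : ℝ) * ((d - c : ℕ) : ℝ)))⁻¹ else 0

theorem sum_indicator_Ico_le (n a b : ℕ) :
    ∑ i : Fin n, (if a ≤ (i : ℕ) + 1 ∧ (i : ℕ) + 1 < b then (1 : ℝ) else 0) ≤ (b - a : ℕ) := by
  rw [Finset.sum_boole, Nat.cast_le, ← Nat.card_Ico]
  refine Finset.card_le_card_of_injOn (fun i => (i : ℕ) + 1) (fun i hi => ?_) fun i _ j _ h => ?_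
  · simpa using hi
  · exact Fin.ext (Nat.succ_injective h)

theorem frobSq_rectAtom_le (n1 n2 a b c d : ℕ) : frobSq (rectAtom n1 n2 a b c d) ≤ 1 := by
  set m : ℝ := ((b - a : ℕ) : ℝ) * ((d - c : ℕ) : ℝ) with hm
  have hm0 : 0 ≤ m := by positivity
  have : frobSq (rectAtom n1 n2 a b c d) =
      (∑ i : Fin n1, (if a ≤ (i : ℕ) + 1 ∧ (i : ℕ) + 1 < b then (1 : ℝ) else 0)) *
      (∑ j : Fin n2, (if c ≤ (j : ℕ) + 1 ∧ (j : ℕ) + 1 < d then (1 : ℝ) else 0)) * m⁻¹ := by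
    rw [frobSq, Finset.sum_mul_sum, Finset.sum_mul]
    refine Finset.sum_congr rfl fun i _ => ?_
    rw [Finset.sum_mul]
    refine Finset.sum_congr rfl fun j _ => ?_
    rw [rectAtom, ← hm, ite_and]
    split_ifs <;> simp [Real.sq_sqrt hm0]
  rw [this]
  calc _ ≤ m * m⁻¹ := by
        rw [hm]
        gcongr
        · exact sum_indicator_Ico_le n1 a b
        · exact sum_indicator_Ico_le n2 c d
    _ ≤ 1 := mul_inv_le_one

theorem matrixRectBound_of_atoms {n1 n2 : ℕ} {w : Fin n1 → Fin n2 → ℝ} {B : ℝ} (hB : 0 ≤ B)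
    (h : ∀ (a b : Fin (n1 + 2)) (c d : Fin (n2 + 2)),
      |∑ i, ∑ j, w i j * rectAtom n1 n2 a b c d i j| ≤ B) : MatrixRectBound w B := by
  intro a b c d
  let a' := min a (n1 + 1)
  let b' := min b (n1 + 1)
  let c' := min c (n2 + 1)
  let d' := min d (n2 + 1)
  have key := h ⟨a', by omega⟩ ⟨b', by omega⟩ ⟨c', by omega⟩ ⟨d', by omega⟩
  set m : ℝ := ((b' - a' : ℕ) : ℝ) * ((d' - c' : ℕ) : ℝ) with hm
  have hm0 : 0 ≤ m := by positivity
  calc |∑ i : Fin n1, ∑ j : Fin n2, if (a ≤ (i : ℕ) + 1 ∧ (i : ℕ) + 1 < b) ∧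
      (c ≤ (j : ℕ) + 1 ∧ (j : ℕ) + 1 < d) then w i j else 0|
      = |(∑ i, ∑ j, w i j * rectAtom n1 n2 a' b' c' d' i j) * √m| := by
        rw [Finset.sum_mul]
        congr 1
        refine Finset.sum_congr rfl fun i _ => ?_
        rw [Finset.sum_mul]
        refine Finset.sum_congr rfl fun j _ => ?_
        have hi := i.isLt
        have hj := j.isLt
        rw [rectAtom, ← hm]
        by_cases hc : (a ≤ (i : ℕ) + 1 ∧ (i : ℕ) + 1 < b) ∧ (c ≤ (j : ℕ) + 1 ∧ (j : ℕ) + 1 < d)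
        · have hpos : 0 < m := by
            refine mul_pos ?_ ?_ <;> rw [Nat.cast_pos] <;> omega
          rw [if_pos hc, if_pos (by omega), mul_assoc,
            inv_mul_cancel₀ (Real.sqrt_pos.2 hpos).ne', mul_one]
        · rw [if_neg hc, if_neg (by omega), mul_zero, zero_mul]
    _ ≤ B * √m := by
        rw [abs_mul, abs_of_nonneg (Real.sqrt_nonneg m)]
        gcongr
    _ ≤ _ := by
        have h1 : b' - a' ≤ b - a := by omega
        have h2 : d' - c' ≤ d - c := by omega
        exact mul_le_mul_of_nonneg_left (Real.sqrt_le_sqrt (mul_le_mul (Nat.cast_le.2 h1)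
          (Nat.cast_le.2 h2) (Nat.cast_nonneg _) (Nat.cast_nonneg _))) hB

/-- A matrix as a vector of a Euclidean space whose norm is the Frobenius norm. -/
def matrixVec (n1 n2 : ℕ) : (Fin n1 → Fin n2 → ℝ) →ₗ[ℝ] EuclideanSpace ℝ (Fin n1 × Fin n2) where
  toFun θ := WithLp.toLp 2 fun p => θ p.1 p.2
  map_add' _ _ := rfl
  map_smul' _ _ := rfl

theorem matrixVec_apply {n1 n2 : ℕ} (θ : Fin n1 → Fin n2 → ℝ) (p : Fin n1 × Fin n2) :
    matrixVec n1 n2 θ p = θ p.1 p.2 := rfl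

theorem norm_sq_matrixVec {n1 n2 : ℕ} (θ : Fin n1 → Fin n2 → ℝ) :
    ‖matrixVec n1 n2 θ‖ ^ 2 = frobSq θ := by
  rw [EuclideanSpace.norm_sq_eq, Fintype.sum_prod_type]
  simp [matrixVec_apply, frobSq]

theorem inner_matrixVec {n1 n2 : ℕ} (y : EuclideanSpace ℝ (Fin n1 × Fin n2))
    (θ : Fin n1 → Fin n2 → ℝ) :
    inner ℝ y (matrixVec n1 n2 θ) = ∑ i, ∑ j, y (i, j) * θ i j := by
  rw [PiLp.inner_apply, Fintype.sum_prod_type]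
  simp [matrixVec_apply, mul_comm]

/-- A finite net of the rectangle hull. -/
theorem exists_net_rectHull (n1 n2 : ℕ) {R : ℝ} (hR : 0 ≤ R) {k : ℕ} (hk : 0 < k) :
    ∃ S : Finset (Fin n1 → Fin n2 → ℝ), S.card ≤ (2 * ((n1 + 2) ^ 2 * (n2 + 2) ^ 2)) ^ k ∧
      ∀ g, InRectHull R g → ∃ s ∈ S, frobSq (g - s) ≤ R ^ 2 / k := by
  classical
  let ι := (Fin (n1 + 2) × Fin (n1 + 2)) × (Fin (n2 + 2) × Fin (n2 + 2))
  let A : ι → Fin n1 → Fin n2 → ℝ := fun q => rectAtom n1 n2 q.1.1 q.1.2 q.2.1 q.2.2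
  let avg : (Fin k → ι × Bool) → Fin n1 → Fin n2 → ℝ := fun t =>
    (k : ℝ)⁻¹ • ∑ l, (if (t l).2 then R else -R) • A (t l).1
  refine ⟨Finset.univ.image avg, Finset.card_image_le.trans (le_of_eq ?_), fun g hg => ?_⟩
  · simp only [Finset.card_univ, Fintype.card_fun, Fintype.card_prod, Fintype.card_fin,
      Fintype.card_bool, ι]
    ring
  · obtain ⟨t, ht⟩ := exists_signed_atoms (fun q => matrixVec n1 n2 (A q))
      (fun q => by
        rw [← sq_le_one_iff₀ (norm_nonneg _), norm_sq_matrixVec]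
        exact frobSq_rectAtom_le _ _ _ _ _ _) hR (matrixVec n1 n2 g)
      (fun y B hB hy => by
        rw [inner_matrixVec]
        refine hg (fun i j => y (i, j)) B hB (matrixRectBound_of_atoms hB fun a b c d => ?_)
        rw [← inner_matrixVec]
        exact hy ((a, b), (c, d))) k
    refine ⟨avg t, Finset.mem_image_of_mem _ (Finset.mem_univ t), ?_⟩
    have hk' : (k : ℝ) ≠ 0 := by positivity
    have hvec : matrixVec n1 n2 (g - avg t) = (k : ℝ)⁻¹ • ∑ l, (matrixVec n1 n2 g -
        (if (t l).2 then R else -R) • matrixVec n1 n2 (A (t l).1)) := by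
      simp only [avg, map_sub, map_smul, map_sum, Finset.sum_sub_distrib, Finset.sum_const,
        Finset.card_univ, Fintype.card_fin, smul_sub]
      rw [← Nat.cast_smul_eq_nsmul ℝ, smul_smul, inv_mul_cancel₀ hk', one_smul]
    rw [← norm_sq_matrixVec, hvec, norm_smul, mul_pow, norm_inv, Real.norm_natCast]
    calc _ ≤ ((k : ℝ)⁻¹) ^ 2 * (k * R ^ 2) := by gcongr
      _ = _ := by field_simp

theorem sum_eq_sum_fin_shift {n : ℕ} (s : Finset ℕ) (φ : ℕ → ℝ)
    (h : ∀ i, ¬ (1 ≤ i ∧ i ≤ n) → φ i = 0) :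
    ∑ i ∈ s, φ i = ∑ i : Fin n, if (i : ℕ) + 1 ∈ s then φ (i + 1) else 0 := by
  rw [Fin.sum_univ_eq_sum_range (fun i => if i + 1 ∈ s then φ (i + 1) else 0),
    ← Finset.sum_filter]
  symm
  refine Finset.sum_of_injOn (fun i => i + 1) (fun i _ j _ h => Nat.succ_injective h)
    (fun i hi => ?_) (fun i hi hni => h i fun hin => hni ?_) fun i _ => rfl
  · simp only [Finset.coe_filter, Set.mem_ofPred_eq] at hi
    exact hi.2
  · refine ⟨i - 1, ?_, by simp only; omega⟩
    simp only [Finset.coe_filter, Finset.mem_range, Set.mem_ofPred_eq]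
    rw [Nat.sub_add_cancel hin.1]
    exact ⟨by omega, hi⟩

/-- Extension of a matrix by zero to one-based indices, repeating the first row and column at
index zero. -/
def padMatrix {n1 n2 : ℕ} (f : Fin n1 → Fin n2 → ℝ) (i j : ℕ) : ℝ :=
  if h : i - 1 < n1 ∧ j - 1 < n2 then f ⟨i - 1, h.1⟩ ⟨j - 1, h.2⟩ else 0

/-- Extension of a matrix by zero to one-based indices. -/
def zeroPadMatrix {n1 n2 : ℕ} (w : Fin n1 → Fin n2 → ℝ) (i j : ℕ) : ℝ :=
  if 1 ≤ i ∧ 1 ≤ j then padMatrix w i j else 0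

theorem padMatrix_succ {n1 n2 : ℕ} (f : Fin n1 → Fin n2 → ℝ) (i : Fin n1) (j : Fin n2) :
    padMatrix f (i + 1) (j + 1) = f i j := by
  simp [padMatrix]

theorem zeroPadMatrix_succ {n1 n2 : ℕ} (w : Fin n1 → Fin n2 → ℝ) (i : Fin n1) (j : Fin n2) :
    zeroPadMatrix w (i + 1) (j + 1) = w i j := by
  simp [zeroPadMatrix, padMatrix_succ]

theorem zeroPadMatrix_eq_zero {n1 n2 : ℕ} (w : Fin n1 → Fin n2 → ℝ) {i j : ℕ}
    (h : ¬ (1 ≤ i ∧ i ≤ n1) ∨ ¬ (1 ≤ j ∧ j ≤ n2)) : zeroPadMatrix w i j = 0 := by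
  rw [zeroPadMatrix]
  split_ifs with hij
  · rw [padMatrix, dif_neg (by omega)]
  · rfl

theorem sum_eq_sum_fin_shift₂ {n1 n2 : ℕ} (s t : Finset ℕ) (φ : ℕ → ℕ → ℝ)
    (h : ∀ i j, ¬ (1 ≤ i ∧ i ≤ n1) ∨ ¬ (1 ≤ j ∧ j ≤ n2) → φ i j = 0) :
    ∑ i ∈ s, ∑ j ∈ t, φ i j = ∑ i : Fin n1, ∑ j : Fin n2,
      if (i : ℕ) + 1 ∈ s ∧ (j : ℕ) + 1 ∈ t then φ (i + 1) (j + 1) else 0 := by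
  rw [sum_eq_sum_fin_shift (n := n1) s _
    fun i hi => Finset.sum_eq_zero fun j _ => h i j (Or.inl hi)]
  refine Finset.sum_congr rfl fun i _ => ?_
  by_cases hi : (i : ℕ) + 1 ∈ s
  · rw [if_pos hi, sum_eq_sum_fin_shift (n := n2) t _ fun j hj => h _ j (Or.inr hj)]
    simp [hi]
  · simp [hi]

theorem MatrixRectBound.zeroPad {n1 n2 : ℕ} {w : Fin n1 → Fin n2 → ℝ} {B : ℝ}
    (h : MatrixRectBound w B) : RectBound (zeroPadMatrix w) B := by
  intro a b m n
  have := h a (a + m) b (b + n)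
  rw [Nat.add_sub_cancel_left, Nat.add_sub_cancel_left] at this
  convert this using 2
  have e : ∀ (φ : ℕ → ℝ) (a m : ℕ), ∑ r ∈ Finset.range m, φ (a + r) =
      ∑ i ∈ Finset.Ico a (a + m), φ i := fun φ a m => by
    rw [Finset.sum_Ico_eq_sum_range, Nat.add_sub_cancel_left]
  rw [e (fun i => ∑ t ∈ Finset.range n, zeroPadMatrix w i (b + t))]
  rw [Finset.sum_congr rfl fun i _ => e (zeroPadMatrix w i) b n, sum_eq_sum_fin_shift₂ (n1 := n1) (n2 := n2) _ _ _ fun i j => zeroPadMatrix_eq_zero w]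
  simp only [Finset.mem_Ico, zeroPadMatrix_succ]

theorem sum_fin_le_sum_window {n1 n2 U V : ℕ} (hU : n1 < 2 ^ U) (hV : n2 < 2 ^ V)
    {φ : ℕ → ℕ → ℝ} (hφ : ∀ i j, 0 ≤ φ i j) :
    ∑ i : Fin n1, ∑ j : Fin n2, φ (i + 1) (j + 1) ≤
      ∑ i ∈ Finset.Ico 1 (2 ^ U), ∑ j ∈ Finset.Ico 1 (2 ^ V), φ i j := by
  have e : ∀ (φ : ℕ → ℝ) (n : ℕ), ∑ r : Fin n, φ (r + 1) =
      ∑ i ∈ Finset.Ico 1 (n + 1), φ i := fun φ n => by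
    rw [Fin.sum_univ_eq_sum_range (fun r => φ (r + 1)), Finset.sum_Ico_eq_sum_range,
      Nat.add_sub_cancel]
    simp_rw [add_comm 1]
  rw [e fun i => ∑ j : Fin n2, φ i (j + 1), Finset.sum_congr rfl fun i _ => e (φ i) n2]
  calc _ ≤ ∑ i ∈ Finset.Ico 1 (n1 + 1), ∑ j ∈ Finset.Ico 1 (2 ^ V), φ i j :=
        Finset.sum_le_sum fun i _ => Finset.sum_le_sum_of_subset_of_nonneg
          (Finset.Ico_subset_Ico_right hV) fun j _ _ => hφ i j
    _ ≤ _ := Finset.sum_le_sum_of_subset_of_nonneg (Finset.Ico_subset_Ico_right hU)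
          fun i _ _ => Finset.sum_nonneg fun j _ => hφ i j

theorem exists_rectHull_approx {n1 n2 U V : ℕ} (hU : n1 < 2 ^ U) (hV : n2 < 2 ^ V) (J : ℕ)
    {f : Fin n1 → Fin n2 → ℝ} (h0 : ∀ i j, 0 ≤ f i j)
    (hf : ∀ ⦃i k j l⦄, i ≤ k → j ≤ l → f k l ≤ f i j) (hf1 : frobSq f ≤ 1) :
    ∃ g, InRectHull ((1 + 2 * J) * (2 * √((U : ℝ) * V))) g ∧ frobSq (f - g) ≤ 8 / 2 ^ J := by
  set F := padMatrix f with hF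
  have hF0 : ∀ i j, 0 ≤ F i j := fun i j => by
    rw [hF, padMatrix]
    split_ifs
    exacts [h0 _ _, le_rfl]
  have hmono : ∀ ⦃i k j l : ℕ⦄, i ≤ k → j ≤ l → F k l ≤ F i j := fun i k j l hik hjl => by
    by_cases hkl : k - 1 < n1 ∧ l - 1 < n2
    · rw [hF, padMatrix, padMatrix, dif_pos hkl, dif_pos (by omega)]
      exact hf (Fin.mk_le_mk.2 (by omega)) (Fin.mk_le_mk.2 (by omega))
    · refine le_trans (le_of_eq ?_) (hF0 i j)
      rw [hF, padMatrix, dif_neg hkl]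
  have hF1 : ∀ j, Antitone fun i => F i j := fun j i k h => hmono h le_rfl
  have hF2 : ∀ i, Antitone (F i) := fun i j l h => hmono le_rfl h
  have hmem : ∀ {n U : ℕ}, n < 2 ^ U → ∀ i : Fin n, (i : ℕ) + 1 ∈ Finset.Ico 1 (2 ^ U) := by
    intro n U h i
    have := i.isLt
    rw [Finset.mem_Ico]
    omega
  have hnorm : ∑ i ∈ Finset.Ico 1 (2 ^ U), ∑ j ∈ Finset.Ico 1 (2 ^ V), F i j ^ 2 ≤ 1 := by
    have e : ∀ i ∈ Finset.Ico 1 (2 ^ U), ∀ j ∈ Finset.Ico 1 (2 ^ V),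
        F i j ^ 2 = zeroPadMatrix f i j ^ 2 := fun i hi j hj => by
      rw [zeroPadMatrix, if_pos ⟨(Finset.mem_Ico.1 hi).1, (Finset.mem_Ico.1 hj).1⟩]
    rw [Finset.sum_congr rfl fun i hi => Finset.sum_congr rfl (e i hi),
      sum_eq_sum_fin_shift₂ (n1 := n1) (n2 := n2) _ _ _
        fun i j h => by rw [zeroPadMatrix_eq_zero f h, sq, zero_mul]]
    simpa only [hmem hU, hmem hV, and_self, if_true, zeroPadMatrix_succ, frobSq] using hf1
  refine ⟨fun i j => F (truncBits J (i + 1)) (truncBits J (j + 1)), fun w B hB hw => ?_, ?_⟩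
  · refine le_trans (le_of_eq ?_) (window_pairing_le hB hw.zeroPad hF0 hF1 hF2 U V J hnorm)
    rw [sum_eq_sum_fin_shift₂ (n1 := n1) (n2 := n2) _ _ _
        fun i j h => by rw [zeroPadMatrix_eq_zero w h, zero_mul]]
    simp only [hmem hU, hmem hV, and_self, if_true, zeroPadMatrix_succ]
  · refine le_trans (le_of_eq ?_) ((sum_fin_le_sum_window hU hV
      (φ := fun i j => (F i j - F (truncBits J i) (truncBits J j)) ^ 2)
      fun i j => sq_nonneg _).trans (window_error_le hF0 hF1 hF2 U V J hnorm))
    simp only [frobSq, Pi.sub_apply, hF, padMatrix_succ]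

theorem frobSq_add_le {n1 n2 : ℕ} (x y : Fin n1 → Fin n2 → ℝ) :
    frobSq (x + y) ≤ 2 * frobSq x + 2 * frobSq y := by
  simp only [frobSq, Finset.mul_sum, ← Finset.sum_add_distrib, Pi.add_apply]
  refine Finset.sum_le_sum fun i _ => Finset.sum_le_sum fun j _ => ?_
  linarith [sq_nonneg (x i j - y i j), add_sq (x i j) (y i j), sub_sq (x i j) (y i j)]

theorem Isotonic.exists_rectHull_approx {n1 n2 U V : ℕ} (hU : n1 < 2 ^ U) (hV : n2 < 2 ^ V)
    (J : ℕ) {θ : Fin n1 → Fin n2 → ℝ} (hθ : Isotonic θ) (hθ1 : frobSq θ ≤ 1) :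
    ∃ g, InRectHull (2 * ((1 + 2 * J) * (2 * √((U : ℝ) * V)))) g ∧
      frobSq (θ - g) ≤ 32 / 2 ^ J := by
  have hle : ∀ φ : Fin n1 → Fin n2 → ℝ, (∀ i j, φ i j ^ 2 ≤ θ i j ^ 2) → frobSq φ ≤ 1 :=
    fun φ h => le_trans (Finset.sum_le_sum fun i _ => Finset.sum_le_sum fun j _ => h i j) hθ1
  have hpos : frobSq (fun i j => max (θ i j) 0) ≤ 1 := hle _ fun i j => by
    rcases max_cases (θ i j) 0 with h | h <;> rw [h.1]; all_goals nlinarith [sq_nonneg (θ i j)]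
  have hneg : frobSq (fun i j => max (-θ i j) 0) ≤ 1 := hle _ fun i j => by
    rcases max_cases (-θ i j) 0 with h | h <;> rw [h.1]; all_goals nlinarith [sq_nonneg (θ i j)]
  obtain ⟨g₁, hg₁, he₁⟩ := _root_.exists_rectHull_approx hU hV J
    (f := fun i j => max (θ (Fin.rev i) (Fin.rev j)) 0) (fun i j => le_max_right _ _)
    (fun i k j l hik hjl => max_le_max_right _ (hθ (Fin.rev_le_rev.2 hik) (Fin.rev_le_rev.2 hjl)))
    ((sum_comp_rev fun i j => max (θ i j) 0 ^ 2).trans_le hpos)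
  obtain ⟨g₂, hg₂, he₂⟩ := _root_.exists_rectHull_approx hU hV J
    (f := fun i j => max (-θ i j) 0) (fun i j => le_max_right _ _)
    (fun i k j l hik hjl => max_le_max_right _ (neg_le_neg (hθ hik hjl))) hneg
  refine ⟨_, hg₁.sub_rev hg₂, ?_⟩
  rw [frobSq, ← sum_comp_rev] at he₁
  have hsplit : (θ - fun i j => g₁ (Fin.rev i) (Fin.rev j) - g₂ i j) =
      (fun i j => max (θ i j) 0 - g₁ (Fin.rev i) (Fin.rev j)) +
        fun i j => -(max (-θ i j) 0 - g₂ i j) := by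
    funext i j
    have : max (θ i j) 0 - max (-θ i j) 0 = θ i j := by
      rcases le_total 0 (θ i j) with h | h
      · rw [max_eq_left h, max_eq_right (by linarith)]; ring
      · rw [max_eq_right h, max_eq_left (by linarith)]; ring
    simp only [Pi.sub_apply, Pi.add_apply]
    linarith
  rw [hsplit]
  refine (frobSq_add_le _ _).trans ?_
  simp only [frobSq, Pi.sub_apply, Fin.rev_rev, neg_sq] at he₁ he₂ ⊢
  calc _ ≤ 2 * (8 / 2 ^ J : ℝ) + 2 * (8 / 2 ^ J) := by gcongr
    _ = _ := by ring

/-- The set of isotonic matrices in the Frobenius unit ball has a finite cover of controlled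
size. -/
theorem exists_cover_isotonic_ball {n1 n2 U V J k : ℕ} (hU : n1 < 2 ^ U) (hV : n2 < 2 ^ V)
    (hk : 0 < k) {ε : ℝ} (hJ : 32 / 2 ^ J ≤ ε ^ 2 / 4)
    (hkε : (2 * ((1 + 2 * J) * (2 * √((U : ℝ) * V)))) ^ 2 / k ≤ ε ^ 2 / 4) :
    ∃ S : Finset (Fin n1 → Fin n2 → ℝ), S.card ≤ (2 * ((n1 + 2) ^ 2 * (n2 + 2) ^ 2)) ^ k ∧
      ∀ θ ∈ {θ : Fin n1 → Fin n2 → ℝ | Isotonic θ ∧ frobSq θ ≤ 1},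
        ∃ s ∈ S, frobSq (θ - s) ≤ ε ^ 2 := by
  obtain ⟨S, hcard, hS⟩ := exists_net_rectHull n1 n2
    (R := 2 * ((1 + 2 * J) * (2 * √((U : ℝ) * V)))) (by positivity) hk
  refine ⟨S, hcard, fun θ hθ => ?_⟩
  obtain ⟨g, hg, hge⟩ := hθ.1.exists_rectHull_approx hU hV J hθ.2
  obtain ⟨s, hs, hse⟩ := hS g hg
  refine ⟨s, hs, ?_⟩
  have := frobSq_add_le (θ - g) (g - s)
  rw [sub_add_sub_cancel] at this
  linarith

theorem coverNum_le_card {n1 n2 : ℕ} {ε : ℝ} {F : Set (Fin n1 → Fin n2 → ℝ)}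
    {S : Finset (Fin n1 → Fin n2 → ℝ)} (hS : ∀ θ ∈ F, ∃ s ∈ S, frobSq (θ - s) ≤ ε ^ 2) :
    coverNum ε F ≤ S.card :=
  Nat.sInf_le ⟨S, rfl, hS⟩

theorem log_natCast_mono : Monotone fun n : ℕ => Real.log n := by
  intro m n h
  rcases Nat.eq_zero_or_pos m with rfl | hm
  · simpa using Real.log_natCast_nonneg n
  · exact Real.log_le_log (by exact_mod_cast hm) (by exact_mod_cast h)

theorem natLog_two_succ_le {n : ℕ} (hn : 1 < n) : ((Nat.log 2 n + 1 : ℕ) : ℝ) ≤ 3 * Real.log n := by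
  have h2 := Real.log_two_gt_d9
  have hln : Real.log 2 ≤ Real.log n := Real.log_le_log two_pos (by exact_mod_cast hn)
  have h : (Nat.log 2 n : ℝ) * Real.log 2 ≤ Real.log n := by
    rw [← Real.log_pow]
    refine Real.log_le_log (by positivity) ?_
    exact_mod_cast Nat.pow_log_le_self 2 (by omega)
  push_cast
  nlinarith

theorem log_add_two_le {n : ℕ} (hn : 1 < n) : Real.log ((n : ℝ) + 2) ≤ 2 * Real.log n := by
  have hn' : (2 : ℝ) ≤ n := by exact_mod_cast hn
  have : Real.log ((n : ℝ) ^ 2) = 2 * Real.log n := by rw [Real.log_pow]; norm_num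
  rw [← this]
  exact Real.log_le_log (by positivity) (by nlinarith)

theorem one_sub_log_le {n1 n2 : ℕ} (h1 : 1 < n1) (h2 : 1 < n2) {ε : ℝ} (hε : 0 < ε) :
    1 - Real.log ε ≤ Real.log (4 * √(Real.log n1 * Real.log n2) / ε) := by
  have hl := Real.log_two_gt_d9
  have hl1 : Real.log 2 ≤ Real.log n1 := Real.log_le_log two_pos (by exact_mod_cast h1)
  have hl2 : Real.log 2 ≤ Real.log n2 := Real.log_le_log two_pos (by exact_mod_cast h2)
  have hs : Real.log 2 ≤ √(Real.log n1 * Real.log n2) :=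
    Real.le_sqrt_of_sq_le (by nlinarith)
  have hs0 : 0 < √(Real.log n1 * Real.log n2) := by linarith
  rw [Real.log_div (by positivity) hε.ne', sub_le_sub_iff_right,
    Real.le_log_iff_exp_le (by positivity)]
  linarith [Real.exp_one_lt_d9]

/-- A single covering of the isotonic unit ball with an explicit entropy bound. -/
theorem exists_cover_log_card_le {n1 n2 : ℕ} (h1 : 1 < n1) (h2 : 1 < n2) {ε : ℝ} (hε : 0 < ε)
    (hε1 : ε ≤ 1) :
    ∃ S : Finset (Fin n1 → Fin n2 → ℝ),
      (∀ θ ∈ {θ : Fin n1 → Fin n2 → ℝ | Isotonic θ ∧ frobSq θ ≤ 1},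
        ∃ s ∈ S, frobSq (θ - s) ≤ ε ^ 2) ∧
      Real.log S.card ≤ (2000 * (Real.log n1 * Real.log n2) *
        (Real.log (4 * √(Real.log n1 * Real.log n2) / ε) / ε)) ^ 2 := by
  have hl := Real.log_two_gt_d9
  have hΛ := one_sub_log_le h1 h2 hε
  have hl1 : Real.log 2 ≤ Real.log n1 := Real.log_le_log two_pos (by exact_mod_cast h1)
  have hl2 : Real.log 2 ≤ Real.log n2 := Real.log_le_log two_pos (by exact_mod_cast h2)
  have hU := natLog_two_succ_le h1
  have hV := natLog_two_succ_le h2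
  have hUn : n1 < 2 ^ (Nat.log 2 n1 + 1) := Nat.lt_pow_succ_log_self one_lt_two n1
  have hVn : n2 < 2 ^ (Nat.log 2 n2 + 1) := Nat.lt_pow_succ_log_self one_lt_two n2
  have hc1 := log_add_two_le h1
  have hc2 := log_add_two_le h2
  have hlε : Real.log ε ≤ 0 := Real.log_nonpos hε.le hε1
  generalize Nat.log 2 n1 + 1 = U at hU hUn
  generalize Nat.log 2 n2 + 1 = V at hV hVn
  set A := Real.log n1 * Real.log n2 with hA
  set Λ := Real.log (4 * √A / ε)
  have hA0 : 0 < A := mul_pos (by linarith) (by linarith)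
  have hΛ1 : 1 ≤ Λ := by linarith
  obtain ⟨J, hJ, hJ'⟩ : ∃ J : ℕ, 128 / ε ^ 2 ≤ (2 : ℝ) ^ J ∧ 1 + 2 * (J : ℝ) ≤ 17 * Λ := by
    set z := (7 * Real.log 2 - 2 * Real.log ε) / Real.log 2 with hz
    have hz0 : 0 ≤ z := div_nonneg (by linarith) (by linarith)
    have hzlog : z * Real.log 2 = 7 * Real.log 2 - 2 * Real.log ε := by
      rw [hz, div_mul_cancel₀ _ (by linarith)]
    refine ⟨⌈z⌉₊, ?_, ?_⟩
    · rw [← Real.log_le_log_iff (by positivity) (by positivity),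
        Real.log_div (by norm_num) (by positivity), Real.log_pow, Real.log_pow,
        show (128 : ℝ) = 2 ^ 7 by norm_num, Real.log_pow]
      push_cast
      rw [← hzlog]
      exact mul_le_mul_of_nonneg_right (Nat.le_ceil z) (by linarith)
    · have := Nat.ceil_lt_add_one hz0
      nlinarith
  set R := 204 * (Λ * √A) with hR
  have hsA : √A ^ 2 = A := Real.sq_sqrt hA0.le
  have hR2 : R ^ 2 = 41616 * (Λ ^ 2 * A) := by rw [hR, mul_pow, mul_pow, hsA]; norm_num
  have hA4 : 0.48 ≤ A := by nlinarith
  have hR1 : 1 ≤ R ^ 2 := by rw [hR2]; nlinarith [one_le_pow₀ hΛ1 (n := 2)]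
  have hT : 2 * ((1 + 2 * (J : ℝ)) * (2 * √((U : ℝ) * V))) ≤ R := by
    have : √((U : ℝ) * V) ≤ 3 * √A := by
      rw [Real.sqrt_le_left (by positivity), mul_pow, hsA, hA]
      calc (U : ℝ) * V ≤ (3 * Real.log n1) * (3 * Real.log n2) :=
            mul_le_mul hU hV (by positivity) (by linarith)
        _ = _ := by ring
    calc _ ≤ 2 * ((17 * Λ) * (2 * (3 * √A))) := by gcongr
      _ = R := by rw [hR]; ring
  have hε2 : 0 < ε ^ 2 := by positivity
  have hkle := Nat.le_ceil (4 * R ^ 2 / ε ^ 2)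
  have hklt := Nat.ceil_lt_add_one (a := 4 * R ^ 2 / ε ^ 2) (by positivity)
  have hk : 0 < ⌈4 * R ^ 2 / ε ^ 2⌉₊ := Nat.ceil_pos.2 (by positivity)
  generalize ⌈4 * R ^ 2 / ε ^ 2⌉₊ = k at hkle hklt hk
  have hk0 : (0 : ℝ) < k := by exact_mod_cast hk
  obtain ⟨S, hcard, hS⟩ := exists_cover_isotonic_ball (J := J) hUn hVn hk (ε := ε)
    (by
      rw [div_le_iff₀ hε2] at hJ
      rw [div_le_iff₀ (by positivity)]
      linarith)
    (by
      rw [div_le_iff₀ hε2] at hkle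
      rw [div_le_iff₀ hk0]
      have := pow_le_pow_left₀ (by positivity) hT 2
      linarith)
  refine ⟨S, hS, ?_⟩
  have hk5 : (k : ℝ) ≤ 5 * R ^ 2 / ε ^ 2 := by
    have : 1 ≤ R ^ 2 / ε ^ 2 := by
      rw [le_div_iff₀ hε2]
      nlinarith [pow_le_one₀ hε.le hε1 (n := 2)]
    calc (k : ℝ) ≤ 4 * R ^ 2 / ε ^ 2 + R ^ 2 / ε ^ 2 := by linarith
      _ = _ := by ring
  have hdict : Real.log (2 * (((n1 : ℝ) + 2) ^ 2 * ((n2 : ℝ) + 2) ^ 2)) ≤ 15 * A := by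
    rw [Real.log_mul (by positivity) (by positivity), Real.log_mul (by positivity) (by positivity),
      Real.log_pow, Real.log_pow]
    push_cast
    nlinarith
  calc Real.log S.card ≤ k * Real.log (2 * (((n1 : ℝ) + 2) ^ 2 * ((n2 : ℝ) + 2) ^ 2)) := by
        refine (log_natCast_mono hcard).trans (le_of_eq ?_)
        push_cast
        rw [Real.log_pow]
    _ ≤ (5 * R ^ 2 / ε ^ 2) * (15 * A) :=
        (mul_le_mul_of_nonneg_left hdict hk0.le).trans
          (mul_le_mul_of_nonneg_right hk5 (by positivity))
    _ = 3121200 * (A ^ 2 * Λ ^ 2 / ε ^ 2) := by rw [hR2]; ring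
    _ ≤ 4000000 * (A ^ 2 * Λ ^ 2 / ε ^ 2) := by gcongr; norm_num
    _ = _ := by ring

theorem sqrt_log_coverNum_le {n1 n2 : ℕ} (h1 : 1 < n1) (h2 : 1 < n2) {ε : ℝ} (hε : 0 < ε)
    (hε1 : ε ≤ 1) :
    √(Real.log (coverNum ε {θ : Fin n1 → Fin n2 → ℝ | Isotonic θ ∧ frobSq θ ≤ 1})) ≤
      2000 * (Real.log n1 * Real.log n2) *
        (Real.log (4 * √(Real.log n1 * Real.log n2) / ε) / ε) := by
  obtain ⟨S, hS, hlog⟩ := exists_cover_log_card_le h1 h2 hε hε1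
  have hΛ : 0 ≤ Real.log (4 * √(Real.log n1 * Real.log n2) / ε) := by
    linarith [one_sub_log_le h1 h2 hε, Real.log_nonpos hε.le hε1]
  refine Real.sqrt_le_iff.2 ⟨?_, (log_natCast_mono (coverNum_le_card hS)).trans hlog⟩
  have := Real.log_natCast_nonneg n1
  have := Real.log_natCast_nonneg n2
  positivity

theorem antitoneOn_sqrt_log_coverNum {n1 n2 : ℕ} (h1 : 1 < n1) (h2 : 1 < n2) :
    AntitoneOn (fun ε => √(Real.log
      (coverNum ε {θ : Fin n1 → Fin n2 → ℝ | Isotonic θ ∧ frobSq θ ≤ 1}))) (Set.Ioc 0 1) := by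
  intro x hx y hy hxy
  refine Real.sqrt_le_sqrt (log_natCast_mono ?_)
  obtain ⟨S, hS, -⟩ := exists_cover_log_card_le h1 h2 hx.1 hx.2
  obtain ⟨T, hT, hcov⟩ := Nat.sInf_mem (s := {k | ∃ S : Finset (Fin n1 → Fin n2 → ℝ), S.card = k ∧
    ∀ θ ∈ {θ : Fin n1 → Fin n2 → ℝ | Isotonic θ ∧ frobSq θ ≤ 1},
      ∃ s ∈ S, frobSq (θ - s) ≤ x ^ 2}) ⟨_, S, rfl, hS⟩
  refine (coverNum_le_card fun θ hθ => ?_).trans_eq hT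
  obtain ⟨s, hs, hle⟩ := hcov θ hθ
  exact ⟨s, hs, hle.trans (pow_le_pow_left₀ hx.1.le hxy 2)⟩

theorem integral_log_div_le {c δ : ℝ} (hc : 0 < c) (hδ : 0 < δ) :
    IntervalIntegrable (fun ε => Real.log (c / ε) / ε) volume δ 1 ∧
      ∫ ε in δ..1, Real.log (c / ε) / ε ≤ Real.log (c / δ) ^ 2 / 2 := by
  have hpos : ∀ x ∈ Set.uIcc δ 1, 0 < x := fun x hx =>
    lt_of_lt_of_le (lt_min hδ one_pos) hx.1
  have hfi : IntervalIntegrable (fun ε => Real.log (c / ε) / ε) volume δ 1 := by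
    refine ContinuousOn.intervalIntegrable ?_
    refine ContinuousOn.div (ContinuousOn.log (continuousOn_const.div continuousOn_id ?_) ?_)
      continuousOn_id ?_
    · exact fun x hx => (hpos x hx).ne'
    · exact fun x hx => (div_pos hc (hpos x hx)).ne'
    · exact fun x hx => (hpos x hx).ne'
  refine ⟨hfi, ?_⟩
  have hderiv : ∀ x ∈ Set.uIcc δ 1,
      HasDerivAt (fun ε => -(Real.log c - Real.log ε) ^ 2 / 2) (Real.log (c / x) / x) x := by
    intro x hx
    have hx0 := hpos x hx
    have := ((((Real.hasDerivAt_log hx0.ne').const_sub (Real.log c)).pow 2).neg).div_const 2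
    refine HasDerivAt.congr_deriv this ?_
    rw [Real.log_div hc.ne' hx0.ne']
    field_simp
    norm_num
    ring
  rw [intervalIntegral.integral_eq_sub_of_hasDerivAt hderiv hfi, Real.log_div hc.ne' hδ.ne',
    Real.log_one]
  nlinarith [sq_nonneg (Real.log c - 0)]

/-- **Theorem 5, inequality (cor1) (entropy integral bound).** There is a universal
constant `C > 0` such that for all `n1, n2 > 1` and every `0 < δ ≤ 1`,
`∫_δ^1 sqrt(log N(ε, B(0,1))) dε
  ≤ (sqrt C / 2) (log n1)(log n2) (log(4 sqrt(log n1 log n2)/δ))²`. -/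
theorem isotonic_ball_entropy_integral :
    ∃ C : ℝ, 0 < C ∧
      ∀ (n1 n2 : ℕ), 1 < n1 → 1 < n2 → ∀ δ : ℝ, 0 < δ → δ ≤ 1 →
        (∫ ε in δ..1, Real.sqrt (Real.log
            (coverNum ε {θ : Fin n1 → Fin n2 → ℝ | Isotonic θ ∧ frobSq θ ≤ 1}))) ≤
          Real.sqrt C / 2 * (Real.log n1 * Real.log n2) *
            Real.log (4 * Real.sqrt (Real.log n1 * Real.log n2) / δ) ^ 2 := by
  refine ⟨2000 ^ 2, by positivity, fun n1 n2 h1 h2 δ hδ hδ1 => ?_⟩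
  have hl1 : 0 < Real.log n1 := Real.log_pos (by exact_mod_cast h1)
  have hl2 : 0 < Real.log n2 := Real.log_pos (by exact_mod_cast h2)
  have hsub : Set.uIcc δ 1 ⊆ Set.Ioc 0 1 := by
    rw [Set.uIcc_of_le hδ1]
    exact fun x hx => ⟨hδ.trans_le hx.1, hx.2⟩
  obtain ⟨hfi, hle⟩ := integral_log_div_le
    (c := 4 * √(Real.log n1 * Real.log n2)) (by positivity) hδ
  calc _ ≤ ∫ ε in δ..1, 2000 * (Real.log n1 * Real.log n2) *
        (Real.log (4 * √(Real.log n1 * Real.log n2) / ε) / ε) := by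
        refine intervalIntegral.integral_mono_on hδ1
          ((antitoneOn_sqrt_log_coverNum h1 h2).mono hsub).intervalIntegrable
          (hfi.const_mul _) fun ε hε => ?_
        exact sqrt_log_coverNum_le h1 h2 (hδ.trans_le hε.1) hε.2
    _ ≤ 2000 * (Real.log n1 * Real.log n2) *
        (Real.log (4 * √(Real.log n1 * Real.log n2) / δ) ^ 2 / 2) := by
        rw [intervalIntegral.integral_const_mul]
        gcongr
    _ = _ := by
        rw [Real.sqrt_sq (by norm_num)]
        ring
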